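/- arXiv:1511.09033 — 2 statements merged into one kernel-verified Lean document; each statement's English description precedes it below -/
import Mathlib

section
/- Assume the data matrix D ∈ ℝ^{d×n} has full row rank d, with d < c, and fix the biases to zero. Suppose F¹ = [f¹_1,…,f¹_c] and F² = [f²_1,…,f²_c] are both global minimizers of F ↦ L(F, 0, D, y) satisfying the columnwise orthogonality constraint f¹_jᵀ f²_j = 0 for every j ∈ {1,…,c}. Then there exists a vector v ∈ ℝ^d such that for every j, ‖f¹_j‖² + vᵀ f¹_j = 0; i.e., the over-determined linear system F¹ᵀ v = −(‖f¹_1‖²,…,‖f¹_c‖²)ᵀ has a solution v, so each column f¹_j lies on the hyper-ellipse {x ∈ ℝ^d : xᵀx + vᵀx = 0}. -/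
open Matrix Finset Real

/-- Softmax cross-entropy loss `L(F, b, D, y) = -∑ i, log p_i(y_i)`. -/
noncomputable def celoss {d n c : ℕ} (D : Matrix (Fin d) (Fin n) ℝ) (y : Fin n → Fin c)
    (F : Matrix (Fin d) (Fin c) ℝ) (b : Fin c → ℝ) : ℝ :=
  -∑ i : Fin n, Real.log
    (Real.exp ((∑ u : Fin d, D u i * F u (y i)) + b (y i)) /
     ∑ j : Fin c, Real.exp ((∑ u : Fin d, D u i * F u j) + b j))

/-!
The loss depends on `F` only through the log-softmax of the logits, and log-softmax is concave,
strictly so between logit vectors with different softmax. At the midpoint of two global minimizers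
the loss cannot drop, so both give every sample the same softmax; their logits then differ by a
constant independent of the class. As `D` has full row rank, the minimizers themselves differ by
one vector common to all columns: `f¹_j = f²_j + w`. Pairing with `f¹_j`, orthogonality leaves
`‖f¹_j‖² = wᵀ f¹_j`, so `v = -w` works.
-/

section LogSoftmax

variable {κ : Type*} [Fintype κ]

/-- The coordinatewise logarithm of the softmax distribution with logits `x`. -/
noncomputable def logSoftmax (x : κ → ℝ) (k : κ) : ℝ :=
  Real.log (Real.exp (x k) / ∑ j, Real.exp (x j))

theorem sum_exp_pos [Nonempty κ] (x : κ → ℝ) : 0 < ∑ j, Real.exp (x j) :=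
  Finset.sum_pos (fun _ _ => Real.exp_pos _) Finset.univ_nonempty

theorem strictConvexOn_sum_exp :
    StrictConvexOn ℝ Set.univ fun x : κ → ℝ => ∑ j, Real.exp (x j) := by
  refine ⟨convex_univ, fun x _ z _ hxz s t hs ht hst => ?_⟩
  obtain ⟨k, hk⟩ := Function.ne_iff.1 hxz
  simp only [smul_eq_mul, Finset.mul_sum, ← Finset.sum_add_distrib]
  exact Finset.sum_lt_sum
    (fun j _ => convexOn_exp.2 (Set.mem_univ (x j)) (Set.mem_univ (z j)) hs.le ht.le hst)
    ⟨k, Finset.mem_univ k,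
      strictConvexOn_exp.2 (Set.mem_univ (x k)) (Set.mem_univ (z k)) hk hs ht hst⟩

theorem logSoftmax_apply (x : κ → ℝ) (k : κ) :
    logSoftmax x k = x k - Real.log (∑ j, Real.exp (x j)) := by
  have : Nonempty κ := ⟨k⟩
  rw [logSoftmax, Real.log_div (Real.exp_ne_zero _) (sum_exp_pos x).ne', Real.log_exp]

theorem sum_exp_logSoftmax [Nonempty κ] (x : κ → ℝ) : ∑ k, Real.exp (logSoftmax x k) = 1 := by
  have hpos := sum_exp_pos x
  simp only [logSoftmax, Real.exp_log (div_pos (Real.exp_pos _) hpos), ← Finset.sum_div,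
    div_self hpos.ne']

theorem logSoftmax_sub_const (x : κ → ℝ) (r : ℝ) :
    logSoftmax (fun j => x j - r) = logSoftmax x := by
  funext k
  simp only [logSoftmax, Real.exp_sub, ← Finset.sum_div,
    div_div_div_cancel_right₀ (Real.exp_ne_zero r)]

theorem sub_eq_sub_of_logSoftmax_eq {x z : κ → ℝ} (h : logSoftmax x = logSoftmax z) (j k : κ) :
    x j - z j = x k - z k := by
  have hj := congrFun h j
  have hk := congrFun h k
  simp only [logSoftmax_apply] at hj hk
  linarith

theorem le_logSoftmax_of_sum_exp_le_one {x : κ → ℝ} (h : ∑ j, Real.exp (x j) ≤ 1) (k : κ) :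
    x k ≤ logSoftmax x k := by
  have : Nonempty κ := ⟨k⟩
  rw [logSoftmax_apply]
  linarith [Real.log_nonpos (sum_exp_pos x).le h]

theorem lt_logSoftmax_of_sum_exp_lt_one {x : κ → ℝ} (h : ∑ j, Real.exp (x j) < 1) (k : κ) :
    x k < logSoftmax x k := by
  have : Nonempty κ := ⟨k⟩
  rw [logSoftmax_apply]
  linarith [Real.log_neg (sum_exp_pos x) h]

theorem logSoftmax_smul_add_smul_logSoftmax (x z : κ → ℝ) (s t : ℝ) :
    logSoftmax (s • logSoftmax x + t • logSoftmax z) = logSoftmax (s • x + t • z) := by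
  rw [← logSoftmax_sub_const (s • x + t • z)
    (s * Real.log (∑ j, Real.exp (x j)) + t * Real.log (∑ j, Real.exp (z j)))]
  congr 1
  funext j
  simp only [Pi.add_apply, Pi.smul_apply, smul_eq_mul, logSoftmax_apply]
  ring

theorem concaveOn_logSoftmax (k : κ) : ConcaveOn ℝ Set.univ fun x : κ → ℝ => logSoftmax x k := by
  refine ⟨convex_univ, fun x _ z _ s t hs ht hst => ?_⟩
  have : Nonempty κ := ⟨k⟩
  have hsum : ∑ j, Real.exp ((s • logSoftmax x + t • logSoftmax z) j) ≤ 1 := by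
    simpa only [sum_exp_logSoftmax, smul_eq_mul, mul_one, hst] using
      strictConvexOn_sum_exp.convexOn.2 (Set.mem_univ (logSoftmax x))
        (Set.mem_univ (logSoftmax z)) hs ht hst
  simp only [← logSoftmax_smul_add_smul_logSoftmax x z]
  exact le_logSoftmax_of_sum_exp_le_one hsum k

theorem lt_logSoftmax_smul_add_smul {x z : κ → ℝ} (hxz : logSoftmax x ≠ logSoftmax z) {s t : ℝ}
    (hs : 0 < s) (ht : 0 < t) (hst : s + t = 1) (k : κ) :
    s * logSoftmax x k + t * logSoftmax z k < logSoftmax (s • x + t • z) k := by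
  have : Nonempty κ := ⟨k⟩
  have hsum : ∑ j, Real.exp ((s • logSoftmax x + t • logSoftmax z) j) < 1 := by
    simpa only [sum_exp_logSoftmax, smul_eq_mul, mul_one, hst] using
      strictConvexOn_sum_exp.2 (Set.mem_univ _) (Set.mem_univ _) hxz hs ht hst
  rw [← logSoftmax_smul_add_smul_logSoftmax]
  exact lt_logSoftmax_of_sum_exp_lt_one hsum k

end LogSoftmax

section Logits

variable {δ ι κ : Type*} [Fintype δ]

/-- The logits `d_iᵀ f_j + b_j` of the samples `d_i`, the columns of `D`, under the classifier with
columns `f_j` and biases `b`. -/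
def logits (D : Matrix δ ι ℝ) (F : Matrix δ κ ℝ) (b : κ → ℝ) (i : ι) (j : κ) : ℝ :=
  (Dᵀ * F) i j + b j

theorem logits_smul_add_smul (D : Matrix δ ι ℝ) (F G : Matrix δ κ ℝ) (b : κ → ℝ) {s t : ℝ}
    (hst : s + t = 1) (i : ι) :
    logits D (s • F + t • G) b i = s • logits D F b i + t • logits D G b i := by
  funext j
  simp only [logits, Matrix.mul_add, Matrix.mul_smul, Matrix.add_apply, Matrix.smul_apply,
    Pi.add_apply, Pi.smul_apply, smul_eq_mul]
  linear_combination -(b j) * hst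

theorem col_sub_eq_col_sub_of_logits_sub_eq {D : Matrix δ ι ℝ} (hD : LinearIndependent ℝ D.row)
    {F G : Matrix δ κ ℝ} {b : κ → ℝ} {j k : κ}
    (h : ∀ i, logits D F b i j - logits D G b i j = logits D F b i k - logits D G b i k) :
    F.col j - G.col j = F.col k - G.col k := by
  have hcol (H : Matrix δ κ ℝ) (i : ι) (l : κ) :
      logits D H b i l = (Dᵀ *ᵥ H.col l) i + b l := rfl
  apply Matrix.mulVec_injective_iff.2 (Matrix.col_transpose D ▸ hD)
  funext i
  have hi := h i
  simp only [hcol] at hi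
  simp only [Matrix.mulVec_sub, Pi.sub_apply]
  linarith

end Logits

theorem linearIndependent_row_of_dotProduct_mul_transpose_mulVec_pos {R m n : Type*} [CommRing R]
    [Preorder R] [Fintype m] [Fintype n] {A : Matrix m n R}
    (hA : ∀ v : m → R, v ≠ 0 → 0 < v ⬝ᵥ ((A * Aᵀ) *ᵥ v)) : LinearIndependent R A.row := by
  rw [← Matrix.vecMul_injective_iff]
  refine (injective_iff_map_eq_zero A.vecMulLinear).2 fun v (hv : v ᵥ* A = 0) => ?_
  by_contra hne
  have hpos := hA v hne
  rw [Matrix.dotProduct_mulVec, ← Matrix.vecMul_vecMul, hv, Matrix.zero_vecMul,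
    zero_dotProduct] at hpos
  exact hpos.false

theorem sum_vecMulVec_col {R m n : Type*} [NonUnitalNonAssocSemiring R] [Fintype n]
    (A : Matrix m n R) : ∑ i, Matrix.vecMulVec (A.col i) (A.col i) = A * Aᵀ := by
  ext u w
  simp only [Matrix.sum_apply, Matrix.vecMulVec_apply, Matrix.mul_apply, Matrix.transpose_apply,
    Matrix.col_apply]

section CrossEntropy

variable {d n c : ℕ} {D : Matrix (Fin d) (Fin n) ℝ} {y : Fin n → Fin c}
  {F G : Matrix (Fin d) (Fin c) ℝ} {b : Fin c → ℝ}

theorem celoss_eq_neg_sum_logSoftmax (D : Matrix (Fin d) (Fin n) ℝ) (y : Fin n → Fin c)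
    (F : Matrix (Fin d) (Fin c) ℝ) (b : Fin c → ℝ) :
    celoss D y F b = -∑ i, logSoftmax (logits D F b i) (y i) :=
  rfl

theorem celoss_smul_add_smul_lt {i : Fin n}
    (hi : logSoftmax (logits D F b i) ≠ logSoftmax (logits D G b i)) {s t : ℝ}
    (hs : 0 < s) (ht : 0 < t) (hst : s + t = 1) :
    celoss D y (s • F + t • G) b < s * celoss D y F b + t * celoss D y G b := by
  simp only [celoss_eq_neg_sum_logSoftmax, logits_smul_add_smul D F G b hst, mul_neg,
    ← neg_add, Finset.mul_sum, ← Finset.sum_add_distrib, neg_lt_neg_iff]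
  exact Finset.sum_lt_sum
    (fun k _ => (concaveOn_logSoftmax (y k)).2 (Set.mem_univ _) (Set.mem_univ _) hs.le ht.le hst)
    ⟨i, Finset.mem_univ i, lt_logSoftmax_smul_add_smul hi hs ht hst (y i)⟩

theorem logSoftmax_logits_eq_of_forall_celoss_le (hF : ∀ H, celoss D y F b ≤ celoss D y H b)
    (hG : ∀ H, celoss D y G b ≤ celoss D y H b) (i : Fin n) :
    logSoftmax (logits D F b i) = logSoftmax (logits D G b i) := by
  by_contra hne
  have hlt := celoss_smul_add_smul_lt (y := y) hne (one_half_pos (α := ℝ)) one_half_pos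
    (add_halves 1)
  linarith [hF ((1 / 2 : ℝ) • F + (1 / 2 : ℝ) • G), hG F]

theorem exists_forall_col_eq_add_of_forall_celoss_le (hD : LinearIndependent ℝ D.row)
    (hF : ∀ H, celoss D y F b ≤ celoss D y H b) (hG : ∀ H, celoss D y G b ≤ celoss D y H b) :
    ∃ w : Fin d → ℝ, ∀ j, F.col j = G.col j + w := by
  rcases isEmpty_or_nonempty (Fin c) with _ | ⟨⟨k⟩⟩
  · exact ⟨0, isEmptyElim⟩
  · refine ⟨F.col k - G.col k, fun j => sub_eq_iff_eq_add'.1 ?_⟩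
    exact col_sub_eq_col_sub_of_logits_sub_eq hD fun i => sub_eq_sub_of_logSoftmax_eq
      (logSoftmax_logits_eq_of_forall_celoss_le hF hG i) j k

end CrossEntropy

theorem multiverse_stmt6_general {d n c : ℕ} {D : Matrix (Fin d) (Fin n) ℝ} {y : Fin n → Fin c}
    {b : Fin c → ℝ} (hD : LinearIndependent ℝ D.row) {F1 F2 : Matrix (Fin d) (Fin c) ℝ}
    (hF1 : ∀ F, celoss D y F1 b ≤ celoss D y F b) (hF2 : ∀ F, celoss D y F2 b ≤ celoss D y F b)
    (horth : ∀ j, F1.col j ⬝ᵥ F2.col j = 0) :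
    ∃ v : Fin d → ℝ, ∀ j, F1.col j ⬝ᵥ F1.col j + v ⬝ᵥ F1.col j = 0 := by
  obtain ⟨w, hw⟩ := exists_forall_col_eq_add_of_forall_celoss_le hD hF1 hF2
  refine ⟨-w, fun j => ?_⟩
  calc F1.col j ⬝ᵥ F1.col j + -w ⬝ᵥ F1.col j
      = F1.col j ⬝ᵥ (F1.col j - w) := by
        rw [neg_dotProduct, dotProduct_sub, dotProduct_comm w, sub_eq_add_neg]
    _ = F1.col j ⬝ᵥ F2.col j := by rw [sub_eq_iff_eq_add.2 (hw j)]
    _ = 0 := horth j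

/-- If `D` has full row rank, `d < c`, and `F¹, F²` are global minimizers of
`F ↦ L(F, 0, D, y)` with columnwise-orthogonal columns, then there is `v ∈ ℝ^d`
with `‖f¹_j‖² + vᵀ f¹_j = 0` for all `j`, i.e. the over-determined system
`F¹ᵀ v = −(‖f¹_1‖²,…,‖f¹_c‖²)ᵀ` has a solution, so each column of `F¹` lies on
the hyper-ellipse `{x : xᵀx + vᵀx = 0}`. -/
theorem multiverse_stmt6 {d n c : ℕ} (hdc : d < c)
    (D : Matrix (Fin d) (Fin n) ℝ) (y : Fin n → Fin c)
    (hK : ∀ v : Fin d → ℝ, v ≠ 0 →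
      0 < v ⬝ᵥ ((∑ i : Fin n, Matrix.vecMulVec (fun u => D u i) (fun u => D u i)) *ᵥ v))
    (F1 F2 : Matrix (Fin d) (Fin c) ℝ)
    (hF1 : ∀ F : Matrix (Fin d) (Fin c) ℝ, celoss D y F1 0 ≤ celoss D y F 0)
    (hF2 : ∀ F : Matrix (Fin d) (Fin c) ℝ, celoss D y F2 0 ≤ celoss D y F 0)
    (horth : ∀ j : Fin c, (∑ u : Fin d, F1 u j * F2 u j) = 0) :
    ∃ v : Fin d → ℝ, ∀ j : Fin c,
      (∑ u : Fin d, F1 u j * F1 u j) + (∑ u : Fin d, v u * F1 u j) = 0 := by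
  have hD : LinearIndependent ℝ D.row :=
    linearIndependent_row_of_dotProduct_mul_transpose_mulVec_pos (sum_vecMulVec_col D ▸ hK)
  exact multiverse_stmt6_general hD hF1 hF2 horth
end

section
/- Let (F¹, b¹) with F¹ = [f¹_1,…,f¹_c] be a global minimizer of the cross-entropy loss achieving L*(D,y). Let λ_1 ≥ ⋯ ≥ λ_d be the eigenvalues of K = Σ_i d_i d_iᵀ with orthonormal eigenvectors, and let v_{d−l+1} (l = 1,…,m−1) be orthonormal eigenvectors for the m−1 smallest eigenvalues λ_{d−l+1}. Suppose α_{jlr} (j ∈ {1,…,c}, l ∈ {1,…,m−1}, r ∈ {1,…,m}) is a tensor of coefficients with α_{jl1} = 0 for all j, l, such that the matrices F^r with columns f^r_j = f¹_j + Σ_{l=1}^{m−1} α_{jlr} v_{d−l+1} satisfy f^r_jᵀ f^s_j = 0 for all j and all r ≠ s. Set A_l = (1/2) Σ_{j=1}^{c} Σ_{j'=j+1}^{c} Σ_{r=1}^{m} (α_{jlr} − α_{j'lr})². Then the joint loss J = Σ_{r=1}^{m} L(F^r, b¹, D, y) satisfies m·L*(D,y) ≤ J ≤ m·L*(D,y)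 + Σ_{l=1}^{m−1} A_l·λ_{d−l+1}. -/
open Matrix Finset Real

/-- The index `d - l + 1` (1-based) of the `l`-th smallest eigenvalue, as an index into
`Fin d` for eigenvalues sorted in decreasing order: `l = 1,…,m-1 ↦ d-1, d-2, …` (0-based). -/
def smallIdx {d m : ℕ} (hd : 0 < d) (l : Fin (m - 1)) : Fin d :=
  ⟨d - 1 - (l : ℕ), by omega⟩

/-!
Adding logits `δ` to `z` changes the loss of one sample by a term linear in `δ` plus the logarithm
of `E exp (X - E X)`, where `X = δ j` with `j` drawn from `softmax z`. By Hoeffding's lemma this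
logarithm is at most one eighth of the squared range of `δ`, hence of the sum of its squared
pairwise differences. At a minimizer the linear terms cancel over the samples: otherwise a small
multiple of the perturbation or of its negative would decrease the loss. For perturbations along
orthonormal eigenvectors of `D * Dᵀ`, the quadratic terms summed over the samples are diagonal in
the coefficients, weighted by the eigenvalues.
-/

open MeasureTheory ProbabilityTheory

lemma integral_exp_le_of_mem_Icc {Ω : Type*} {mΩ : MeasurableSpace Ω} {P : Measure Ω}
    [IsProbabilityMeasure P] {X : Ω → ℝ} {a b : ℝ} (hm : AEMeasurable X P)
    (hX : ∀ᵐ ω ∂P, X ω ∈ Set.Icc a b) :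
    ∫ ω, exp (X ω) ∂P ≤ exp (∫ ω, X ω ∂P + (b - a) ^ 2 / 8) := by
  have hcentered := (hasSubgaussianMGF_of_mem_Icc hm hX).mgf_le 1
  simp only [mgf, one_mul, exp_sub, integral_div, NNReal.coe_pow, NNReal.coe_div, coe_nnnorm,
    norm_eq_abs, NNReal.coe_ofNat, div_pow, sq_abs, one_pow, mul_one] at hcentered
  rw [div_le_iff₀' (exp_pos _), ← exp_add] at hcentered
  refine hcentered.trans_eq ?_
  ring_nf

section Softmax

variable {ι : Type*} [Fintype ι]

/-- The softmax probability vector of the logits `z`. -/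
noncomputable def softmax (z : ι → ℝ) (j : ι) : ℝ :=
  exp (z j) / ∑ k, exp (z k)

variable [Nonempty ι]

lemma sum_exp_pos_s9 (z : ι → ℝ) : 0 < ∑ j, exp (z j) :=
  sum_pos (fun j _ => exp_pos (z j)) univ_nonempty

lemma softmax_pos (z : ι → ℝ) (j : ι) : 0 < softmax z j :=
  div_pos (exp_pos _) (sum_exp_pos_s9 z)

lemma softmax_add (z δ : ι → ℝ) (j : ι) :
    softmax (z + δ) j = softmax z j * exp (δ j) / ∑ k, softmax z k * exp (δ k) := by
  have hz := (sum_exp_pos_s9 z).ne'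
  simp only [softmax, Pi.add_apply, exp_add, div_mul_eq_mul_div, ← sum_div]
  field_simp

lemma sum_softmax_mul_exp_le {z δ : ι → ℝ} {a b : ℝ} (hδ : ∀ j, δ j ∈ Set.Icc a b) :
    ∑ j, softmax z j * exp (δ j) ≤ exp (∑ j, softmax z j * δ j + (b - a) ^ 2 / 8) := by
  let _ : MeasurableSpace ι := ⊤
  have : MeasurableSingletonClass ι := ⟨fun _ => trivial⟩
  -- The softmax distribution is the counting measure exponentially tilted by `z`.
  have : IsProbabilityMeasure (Measure.count.tilted z) := isProbabilityMeasure_tilted .of_finite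
  have hoeffding := integral_exp_le_of_mem_Icc (P := Measure.count.tilted z)
    measurable_from_top.aemeasurable (ae_of_all _ hδ)
  simpa only [integral_tilted, integral_count, smul_eq_mul] using! hoeffding

lemma neg_log_softmax_add_le {z δ : ι → ℝ} {a b : ℝ} (hδ : ∀ j, δ j ∈ Set.Icc a b) (y : ι) :
    -log (softmax (z + δ) y) ≤
      -log (softmax z y) + (∑ j, softmax z j * δ j - δ y) + (b - a) ^ 2 / 8 := by
  have hsum : 0 < ∑ j, softmax z j * exp (δ j) :=
    sum_pos (fun j _ => mul_pos (softmax_pos z j) (exp_pos _)) univ_nonempty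
  have hlog := (log_le_iff_le_exp hsum).2 (sum_softmax_mul_exp_le hδ)
  rw [softmax_add, log_div (mul_pos (softmax_pos z y) (exp_pos _)).ne' hsum.ne',
    log_mul (softmax_pos z y).ne' (exp_pos _).ne', log_exp]
  linarith

end Softmax

section PairwiseDifferences

/-- The sum of the squared differences `(δ j - δ k) ^ 2` over the pairs `j < k`. It measures how far
the logits `δ` are from being constant, that is, from leaving softmax probabilities unchanged when
added to other logits. -/
def sumSqDiff {R ι : Type*} [Ring R] [Fintype ι] [Preorder ι] [LocallyFiniteOrderTop ι]
    (δ : ι → R) : R :=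
  ∑ j, ∑ k ∈ Ioi j, (δ j - δ k) ^ 2

lemma sum_sumSqDiff_comm {R ι ν : Type*} [Ring R] [Fintype ι] [Preorder ι] [LocallyFiniteOrderTop ι]
    [Fintype ν] (δ : ν → ι → R) :
    ∑ i, sumSqDiff (δ i) = ∑ j, ∑ k ∈ Ioi j, ∑ i, (δ i j - δ i k) ^ 2 :=
  sum_comm.trans (sum_congr rfl fun _ _ => sum_comm)

lemma sumSqDiff_smul {R ι : Type*} [CommRing R] [Fintype ι] [Preorder ι] [LocallyFiniteOrderTop ι]
    (t : R) (δ : ι → R) : sumSqDiff (t • δ) = t ^ 2 * sumSqDiff δ := by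
  simp only [sumSqDiff, mul_sum, Pi.smul_apply, smul_eq_mul, ← mul_sub, mul_pow]

variable {ι : Type*} [Fintype ι] [LinearOrder ι] [LocallyFiniteOrderTop ι]

lemma sq_sub_le_sumSqDiff {R : Type*} [CommRing R] [LinearOrder R] [IsStrictOrderedRing R]
    (δ : ι → R) (j k : ι) : (δ j - δ k) ^ 2 ≤ sumSqDiff δ := by
  have hnonneg (i : ι) : 0 ≤ ∑ k ∈ Ioi i, (δ i - δ k) ^ 2 := sum_nonneg fun _ _ => sq_nonneg _
  wlog hjk : j < k generalizing j k
  · rcases (not_lt.1 hjk).eq_or_lt with rfl | hkj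
    · simpa using! sum_nonneg fun i (_ : i ∈ univ) => hnonneg i
    · rw [sub_sq_comm]
      exact this k j hkj
  calc (δ j - δ k) ^ 2 ≤ ∑ k ∈ Ioi j, (δ j - δ k) ^ 2 :=
        single_le_sum (f := fun k => (δ j - δ k) ^ 2) (fun _ _ => sq_nonneg _) (mem_Ioi.2 hjk)
    _ ≤ sumSqDiff δ := single_le_sum (f := fun j => ∑ k ∈ Ioi j, (δ j - δ k) ^ 2)
        (fun i _ => hnonneg i) (mem_univ j)

lemma neg_log_softmax_add_le_sumSqDiff (z δ : ι → ℝ) (y : ι) :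
    -log (softmax (z + δ) y) ≤
      -log (softmax z y) + (∑ j, softmax z j * δ j - δ y) + sumSqDiff δ / 8 := by
  have : Nonempty ι := ⟨y⟩
  obtain ⟨jmin, hmin⟩ := Finite.exists_min δ
  obtain ⟨jmax, hmax⟩ := Finite.exists_max δ
  refine (neg_log_softmax_add_le (fun j => ⟨hmin j, hmax j⟩) y).trans ?_
  gcongr
  exact sq_sub_le_sumSqDiff δ jmax jmin

end PairwiseDifferences

section Eigenvectors

variable {R ι κ ν : Type*} [DecidableEq ι] [Fintype ν]

lemma sum_vecMulVec_col_s9 [NonUnitalNonAssocSemiring R] (D : Matrix κ ν R) :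
    ∑ i, vecMulVec (fun u => D u i) (fun u => D u i) = D * Dᵀ := by
  ext u u'
  simp only [Matrix.sum_apply, vecMulVec_apply, mul_apply, transpose_apply]

lemma mul_transpose_self_eq_diagonal_of_eigenvectors [CommSemiring R] [Fintype κ]
    {D : Matrix κ ν R} {v : ι → κ → R} {μ : ι → R}
    (hv : ∀ k l, v k ⬝ᵥ v l = if k = l then 1 else 0) (hD : ∀ l, (D * Dᵀ) *ᵥ v l = μ l • v l) :
    (of v * D) * (of v * D)ᵀ = diagonal μ := by
  ext k l
  calc ((of v * D) * (of v * D)ᵀ) k l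
      = (of v * ((D * Dᵀ) * (of v)ᵀ)) k l := by rw [transpose_mul]; simp only [Matrix.mul_assoc]
    _ = v k ⬝ᵥ (D * Dᵀ) *ᵥ v l := rfl
    _ = diagonal μ k l := by
      rw [hD, dotProduct_smul, hv, diagonal_apply]
      split_ifs with hkl <;> simp [hkl]

lemma sum_sq_vecMul_of_mul_transpose_eq_diagonal [CommSemiring R] [Fintype ι] {Q : Matrix ι ν R}
    {μ : ι → R} (hQ : Q * Qᵀ = diagonal μ) (x : ι → R) :
    ∑ i, (x ᵥ* Q) i ^ 2 = ∑ l, x l ^ 2 * μ l := by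
  calc ∑ i, (x ᵥ* Q) i ^ 2 = (x ᵥ* Q) ⬝ᵥ (x ᵥ* Q) := by simp only [dotProduct, sq]
    _ = x ⬝ᵥ (Q * Qᵀ) *ᵥ x := by rw [← mulVec_mulVec, dotProduct_mulVec, mulVec_transpose]
    _ = ∑ l, x l ^ 2 * μ l := by
      simp only [hQ, dotProduct, mulVec_diagonal]
      exact sum_congr rfl fun l _ => by ring

lemma sum_sumSqDiff_mul_of_mul_transpose_eq_diagonal [CommRing R] [Fintype ι] {γ : Type*}
    [Fintype γ] [Preorder γ] [LocallyFiniteOrderTop γ] {Q : Matrix ι ν R} {μ : ι → R}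
    (hQ : Q * Qᵀ = diagonal μ) (A : Matrix γ ι R) :
    ∑ i, sumSqDiff ((A * Q).col i) = ∑ l, sumSqDiff (A.col l) * μ l := by
  have hpair (j k : γ) : ∑ i, ((A * Q) j i - (A * Q) k i) ^ 2 =
      ∑ l, (A j l - A k l) ^ 2 * μ l := by
    simpa only [sub_vecMul] using! sum_sq_vecMul_of_mul_transpose_eq_diagonal hQ (A j - A k)
  rw [sum_sumSqDiff_comm]
  simp only [col_apply, hpair, sumSqDiff, sum_mul]
  exact (sum_congr rfl fun j _ => sum_comm).trans sum_comm

end Eigenvectors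

section CrossEntropy

variable {d n c : ℕ} (D : Matrix (Fin d) (Fin n) ℝ) (y : Fin n → Fin c)
  (F : Matrix (Fin d) (Fin c) ℝ) (b : Fin c → ℝ)

lemma celoss_eq_sum_neg_log_softmax :
    celoss D y F b = ∑ i, -log (softmax ((Dᵀ * F).row i + b) (y i)) :=
  (sum_neg_distrib _).symm

/-- The derivative of `celoss D y · b` at `F` in the direction `Δ`, that is, the coefficient of
its first-order expansion. -/
noncomputable def celossDeriv (Δ : Matrix (Fin d) (Fin c) ℝ) : ℝ :=
  ∑ i, (∑ j, softmax ((Dᵀ * F).row i + b) j * (Dᵀ * Δ) i j - (Dᵀ * Δ) i (y i))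

lemma celoss_add_le (Δ : Matrix (Fin d) (Fin c) ℝ) :
    celoss D y (F + Δ) b ≤
      celoss D y F b + celossDeriv D y F b Δ + (∑ i, sumSqDiff ((Dᵀ * Δ).row i)) / 8 := by
  simp only [celoss_eq_sum_neg_log_softmax, celossDeriv, sum_div, ← sum_add_distrib]
  gcongr with i
  have hlogits : (Dᵀ * (F + Δ)).row i + b = (Dᵀ * F).row i + b + (Dᵀ * Δ).row i := by
    rw [Matrix.mul_add, add_right_comm]
    rfl
  rw [hlogits]
  exact neg_log_softmax_add_le_sumSqDiff _ _ _

variable {D y F b}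

lemma celossDeriv_smul (t : ℝ) (Δ : Matrix (Fin d) (Fin c) ℝ) :
    celossDeriv D y F b (t • Δ) = t * celossDeriv D y F b Δ := by
  simp only [celossDeriv, Matrix.mul_smul, Matrix.smul_apply, smul_eq_mul, mul_left_comm _ t,
    ← mul_sum, ← mul_sub]

lemma celossDeriv_eq_zero_of_forall_le
    (hmin : ∀ F' : Matrix (Fin d) (Fin c) ℝ, celoss D y F b ≤ celoss D y F' b)
    (Δ : Matrix (Fin d) (Fin c) ℝ) : celossDeriv D y F b Δ = 0 := by
  have hquad (t : ℝ) :
      0 ≤ (∑ i, sumSqDiff ((Dᵀ * Δ).row i)) / 8 * (t * t) + celossDeriv D y F b Δ * t + 0 := by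
    have hspread : ∑ i, sumSqDiff ((Dᵀ * (t • Δ)).row i) =
        t ^ 2 * ∑ i, sumSqDiff ((Dᵀ * Δ).row i) := by
      rw [Matrix.mul_smul, mul_sum]
      exact sum_congr rfl fun i _ => sumSqDiff_smul t _
    have hle := (hmin (F + t • Δ)).trans (celoss_add_le D y F b (t • Δ))
    rw [celossDeriv_smul, hspread] at hle
    linarith
  have hdiscrim := discrim_le_zero hquad
  rw [discrim, mul_zero, sub_zero] at hdiscrim
  exact pow_eq_zero_iff two_ne_zero |>.1 (hdiscrim.antisymm (sq_nonneg _))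

lemma celoss_add_eigenvectors_le {ι : Type*} [Fintype ι] [DecidableEq ι]
    (hmin : ∀ F' : Matrix (Fin d) (Fin c) ℝ, celoss D y F b ≤ celoss D y F' b)
    {v : ι → Fin d → ℝ} {μ : ι → ℝ} (hv : ∀ k l, v k ⬝ᵥ v l = if k = l then 1 else 0)
    (hD : ∀ l, (D * Dᵀ) *ᵥ v l = μ l • v l) (A : Matrix (Fin c) ι ℝ) :
    celoss D y (F + (A * of v)ᵀ) b ≤ celoss D y F b + (∑ l, sumSqDiff (A.col l) * μ l) / 8 := by
  have hle := celoss_add_le D y F b (A * of v)ᵀ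
  rwa [celossDeriv_eq_zero_of_forall_le hmin, add_zero, ← transpose_mul, Matrix.mul_assoc,
    row_transpose, sum_sumSqDiff_mul_of_mul_transpose_eq_diagonal
      (mul_transpose_self_eq_diagonal_of_eigenvectors hv hD)] at hle

end CrossEntropy

lemma smallIdx_injective {d m : ℕ} (hd : 0 < d) (hmd : m - 1 ≤ d) :
    Function.Injective (smallIdx hd : Fin (m - 1) → Fin d) := fun k l hkl => by
  simp only [smallIdx, Fin.mk.injEq] at hkl
  omega

theorem multiverse_stmt9_general {d n c : ℕ} {ι ρ : Type*} [Fintype ι] [DecidableEq ι] [Fintype ρ]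
    (D : Matrix (Fin d) (Fin n) ℝ) (y : Fin n → Fin c)
    (F1 : Matrix (Fin d) (Fin c) ℝ) (b1 : Fin c → ℝ)
    (hmin : ∀ F : Matrix (Fin d) (Fin c) ℝ, celoss D y F1 b1 ≤ celoss D y F b1)
    {v : ι → Fin d → ℝ} {μ : ι → ℝ} (hv : ∀ k l, v k ⬝ᵥ v l = if k = l then 1 else 0)
    (heig : ∀ l, (∑ i, vecMulVec (fun u => D u i) (fun u => D u i)) *ᵥ v l = μ l • v l)
    (α : Fin c → ι → ρ → ℝ) (F : ρ → Matrix (Fin d) (Fin c) ℝ)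
    (hF : ∀ r u j, F r u j = F1 u j + ∑ l, α j l r * v l u) :
    Fintype.card ρ * celoss D y F1 b1 ≤ ∑ r, celoss D y (F r) b1 ∧
    ∑ r, celoss D y (F r) b1 ≤ Fintype.card ρ * celoss D y F1 b1 +
      (∑ l, (1 / 2 * ∑ j, ∑ j' ∈ Ioi j, ∑ r, (α j l r - α j' l r) ^ 2) * μ l) / 4 := by
  rw [sum_vecMulVec_col_s9] at heig
  have hle (r : ρ) : celoss D y (F r) b1 ≤
      celoss D y F1 b1 + (∑ l, sumSqDiff (fun j => α j l r) * μ l) / 8 := by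
    have hFr : F r = F1 + ((of fun j l => α j l r) * of v)ᵀ := by
      ext u j
      exact hF r u j
    rw [hFr]
    exact celoss_add_eigenvectors_le hmin hv heig _
  have hA (l : ι) : ∑ j, ∑ j' ∈ Ioi j, ∑ r, (α j l r - α j' l r) ^ 2 =
      ∑ r, sumSqDiff (fun j => α j l r) := (sum_sumSqDiff_comm fun r j => α j l r).symm
  constructor
  · simpa using sum_le_sum fun r (_ : r ∈ univ) => hmin (F r)
  · refine (sum_le_sum fun r _ => hle r).trans_eq ?_
    simp only [hA, sum_add_distrib, sum_const, card_univ, nsmul_eq_mul, ← sum_div]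
    rw [sum_comm]
    simp only [mul_assoc, ← mul_sum, ← sum_mul]
    ring

/-- Multiverse bound for `m` orthogonal classifier sets built from a global minimizer
`(F¹, b¹)` by perturbing along orthonormal eigenvectors of `K = ∑ d_i d_iᵀ` belonging to
its `m-1` smallest eigenvalues:
`m·L*(D,y) ≤ ∑_r L(F^r, b¹, D, y) ≤ m·L*(D,y) + ∑_l A_l·λ_{d-l+1}`. -/
theorem multiverse_stmt9 {d n c m : ℕ} (hd : 0 < d) (hm : 0 < m) (hmd : m - 1 ≤ d)
    (D : Matrix (Fin d) (Fin n) ℝ) (y : Fin n → Fin c)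
    (F1 : Matrix (Fin d) (Fin c) ℝ) (b1 : Fin c → ℝ)
    (hmin : ∀ (F : Matrix (Fin d) (Fin c) ℝ) (b : Fin c → ℝ),
      celoss D y F1 b1 ≤ celoss D y F b)
    -- an orthonormal eigenbasis of `K` with eigenvalues sorted in decreasing order
    (w : Fin d → Fin d → ℝ) (μ : Fin d → ℝ)
    (horthw : ∀ k k' : Fin d, (∑ u : Fin d, w k u * w k' u) = if k = k' then 1 else 0)
    (heig : ∀ k : Fin d,
      (∑ i : Fin n, Matrix.vecMulVec (fun u => D u i) (fun u => D u i)) *ᵥ w k = μ k • w k)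
    (hsorted : ∀ k k' : Fin d, k ≤ k' → μ k' ≤ μ k)
    -- the coefficient tensor `α_{jlr}`, with `α_{jl1} = 0` so that `F^1 = F¹`
    (α : Fin c → Fin (m - 1) → Fin m → ℝ)
    (hα1 : ∀ (j : Fin c) (l : Fin (m - 1)), α j l ⟨0, hm⟩ = 0)
    -- the classifier sets `f^r_j = f¹_j + ∑_l α_{jlr} v_{d-l+1}`
    (F : Fin m → Matrix (Fin d) (Fin c) ℝ)
    (hF : ∀ (r : Fin m) (u : Fin d) (j : Fin c),
      F r u j = F1 u j + ∑ l : Fin (m - 1), α j l r * w (smallIdx hd l) u)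
    -- columnwise orthogonality between the different sets
    (horthF : ∀ (j : Fin c) (r s : Fin m), r ≠ s →
      (∑ u : Fin d, F r u j * F s u j) = 0) :
    (m : ℝ) * celoss D y F1 b1 ≤ ∑ r : Fin m, celoss D y (F r) b1 ∧
    ∑ r : Fin m, celoss D y (F r) b1 ≤ (m : ℝ) * celoss D y F1 b1 +
      ∑ l : Fin (m - 1),
        ((1 / 2 : ℝ) * ∑ j : Fin c, ∑ j' ∈ Finset.Ioi j, ∑ r : Fin m,
          (α j l r - α j' l r) ^ 2) * μ (smallIdx hd l) := by
  have hindex (k l : Fin (m - 1)) := (smallIdx_injective hd hmd).eq_iff (a := k) (b := l)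
  have hbounds := multiverse_stmt9_general D y F1 b1 (hmin · b1)
    (fun k l => (horthw _ _).trans (if_congr (hindex k l) rfl rfl)) (fun l => heig _) α F hF
  rw [Fintype.card_fin] at hbounds
  exact ⟨hbounds.1, by linarith⟩
end
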